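/- Per-step potential inequality (clamping at 1): let β > 0, z ∈ [0,1], x' ∈ [0,1], and f₀ ≥ β·(1 − x'). Then β·(1 − x') + Φ(1,z) − Φ(x',z) − 2(1 − z)·f₀ ≤ −(β/2)·(x' − 1)² ≤ 0, where Φ(x,z) := β·(x²/2 + 2z − 2z·x). -/

import Mathlib

/-- The potential function `Φ(x,z) = β·(x²/2 + 2z − 2z·x)` used in the
competitive analysis of the continuous algorithm cCHASE. -/
noncomputable def Phi (β x z : ℝ) : ℝ := β * (x ^ 2 / 2 + 2 * z - 2 * z * x)

/-! Since `Φ(·,z)` is quadratic, its Taylor expansion at the new state `1` is exact, with slope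
`β·(1 − 2z)` and curvature `β`. Adding the switching cost, which has slope `β`, gives total slope
`2β·(1 − z)`: the resulting linear term `2(1 − z)·β·(1 − x')` is paid for by `2(1 − z)·f₀`, and
the curvature term is what remains on the right. -/

theorem phi_sub_phi (β x y z : ℝ) :
    Phi β y z - Phi β x z = β * (y - 2 * z) * (y - x) - β / 2 * (x - y) ^ 2 := by
  unfold Phi
  ring

theorem switchingCost_add_phi_one_sub_phi (β x z : ℝ) :
    β * (1 - x) + Phi β 1 z - Phi β x z =
      2 * (1 - z) * (β * (1 - x)) - β / 2 * (x - 1) ^ 2 := by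
  rw [add_sub_assoc, phi_sub_phi]
  ring

theorem switchingCost_add_phi_one_sub_phi_sub_le {β f₀ x z : ℝ} (hz : z ≤ 1)
    (hf : β * (1 - x) ≤ f₀) :
    β * (1 - x) + Phi β 1 z - Phi β x z - 2 * (1 - z) * f₀ ≤ -(β / 2) * (x - 1) ^ 2 := by
  have weight_nonneg : 0 ≤ 2 * (1 - z) := mul_nonneg zero_le_two (sub_nonneg.mpr hz)
  have linear_term_le : 2 * (1 - z) * (β * (1 - x)) ≤ 2 * (1 - z) * f₀ :=
    mul_le_mul_of_nonneg_left hf weight_nonneg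
  rw [switchingCost_add_phi_one_sub_phi]
  linarith

theorem stmt12_general {β f₀ z x' : ℝ} (hβ : 0 ≤ β) (hz : z ≤ 1) (hf : β * (1 - x') ≤ f₀) :
    β * (1 - x') + Phi β 1 z - Phi β x' z - 2 * (1 - z) * f₀
      ≤ -(β / 2) * (x' - 1) ^ 2 ∧
    -(β / 2) * (x' - 1) ^ 2 ≤ 0 :=
  ⟨switchingCost_add_phi_one_sub_phi_sub_le hz hf,
    mul_nonpos_of_nonpos_of_nonneg (neg_nonpos.mpr (div_nonneg hβ zero_le_two)) (sq_nonneg _)⟩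

/-- per-step potential inequality, clamping at 1: if `β > 0`,
`z ∈ [0,1]`, `x' ∈ [0,1]` and `f₀ ≥ β·(1 − x')`, then
`β·(1 − x') + Φ(1,z) − Φ(x',z) − 2(1 − z)·f₀ ≤ −(β/2)·(x' − 1)² ≤ 0`. -/
theorem stmt12 (β f₀ z x' : ℝ) (hβ : 0 < β)
    (hz : z ∈ Set.Icc (0 : ℝ) 1) (hx' : x' ∈ Set.Icc (0 : ℝ) 1)
    (hf : β * (1 - x') ≤ f₀) :
    β * (1 - x') + Phi β 1 z - Phi β x' z - 2 * (1 - z) * f₀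
      ≤ -(β / 2) * (x' - 1) ^ 2 ∧
    -(β / 2) * (x' - 1) ^ 2 ≤ 0 :=
  stmt12_general hβ.le hz.2 hf
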